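/- Let M be a matrix with t ≥ 1 columns and u ≥ 1 rows and entries in {0, 1, −1}. Then the growth rate gr(Grid(M)) = lim_{n→∞} |Grid_n(M)|^{1/n} (which exists) is an algebraic integer: there is a monic polynomial with integer coefficients having gr(Grid(M)) as a root. -/

import Mathlib

noncomputable section

open Filter

open scoped Classical

/-- The point `p` (0-based) of the permutation `σ` lies in the cell `(i, j)` of the gridding
determined by the column dividers `c` and row dividers `r`. -/
def InCell {t u k : ℕ} (σ : Equiv.Perm (Fin k)) (c : Fin (t + 1) → ℕ) (r : Fin (u + 1) → ℕ)
    (i : Fin t) (j : Fin u) (p : Fin k) : Prop :=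
  c i.castSucc ≤ (p : ℕ) ∧ (p : ℕ) < c i.succ ∧
    r j.castSucc ≤ (σ p : ℕ) ∧ (σ p : ℕ) < r j.succ

/-- `c`, `r` form an `M`-gridding of the permutation `σ`. -/
def IsGridding {t u k : ℕ} (M : Fin t → Fin u → ℤ) (σ : Equiv.Perm (Fin k))
    (c : Fin (t + 1) → ℕ) (r : Fin (u + 1) → ℕ) : Prop :=
  Monotone c ∧ Monotone r ∧ c 0 = 0 ∧ c (Fin.last t) = k ∧ r 0 = 0 ∧ r (Fin.last u) = k ∧
    ∀ (i : Fin t) (j : Fin u),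
      (M i j = 0 → ∀ p : Fin k, ¬ InCell σ c r i j p) ∧
        (M i j = 1 → ∀ p q : Fin k, InCell σ c r i j p → InCell σ c r i j q →
          p < q → σ p < σ q) ∧
          (M i j = -1 → ∀ p q : Fin k, InCell σ c r i j p → InCell σ c r i j q →
            p < q → σ q < σ p)

/-- Membership in the monotone grid class `Grid(M)`. -/
def InGridClass {t u : ℕ} (M : Fin t → Fin u → ℤ) {k : ℕ} (σ : Equiv.Perm (Fin k)) : Prop :=
  ∃ (c : Fin (t + 1) → ℕ) (r : Fin (u + 1) → ℕ), IsGridding M σ c r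

/-- `|Grid_n(M)|`, the number of permutations of length `n` in the grid class of `M`. -/
def gridCount {t u : ℕ} (M : Fin t → Fin u → ℤ) (n : ℕ) : ℕ :=
  Nat.card {σ : Equiv.Perm (Fin n) // InGridClass M σ}

theorem spectral_aux {V : Type} [Fintype V] [Nonempty V] (N : Matrix V V ℤ)
    (hsymm : ∀ i j, N i j = N j i) (hnn : ∀ i j, 0 ≤ N i j) :
    ∃ l : ℝ, 0 ≤ l ∧ IsIntegral ℤ l ∧
      (∃ v : V → ℝ, (∀ i, 0 ≤ v i) ∧ v ≠ 0 ∧ ∀ i, ∑ j, (N i j : ℝ) * v j = l * v i) ∧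
      ∀ m > l, ∃ z : V → ℝ, (∀ i, 0 < z i) ∧ ∀ i, ∑ j, (N i j : ℝ) * z j ≤ m * z i := by
  set R : Matrix V V ℝ := N.map (Int.cast : ℤ → ℝ) with hR
  have hRij : ∀ i j, R i j = (N i j : ℝ) := fun i j => rfl
  have hRnn : ∀ i j, 0 ≤ R i j := fun i j => by rw [hRij]; exact_mod_cast hnn i j
  have hRs : ∀ i j, R i j = R j i := fun i j => by rw [hRij, hRij, hsymm]
  let q : (V → ℝ) → ℝ := fun z => z ⬝ᵥ (R.mulVec z)
  let S : Set (V → ℝ) := {z | z ⬝ᵥ z = 1}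
  have hScomp : IsCompact S := by
    apply Metric.isCompact_of_isClosed_isBounded
    · apply isClosed_eq _ continuous_const
      unfold dotProduct
      fun_prop
    · rw [Metric.isBounded_iff_subset_closedBall 0]
      refine ⟨1, fun z hz => ?_⟩
      rw [mem_closedBall_zero_iff, pi_norm_le_iff_of_nonneg zero_le_one]
      intro i
      have h1 : z i * z i ≤ 1 := by
        have hz' : ∑ i, z i * z i = 1 := hz
        rw [← hz']
        exact Finset.single_le_sum (f := fun i => z i * z i) (fun j _ => mul_self_nonneg _)
          (Finset.mem_univ i)
      rw [Real.norm_eq_abs, abs_le]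
      constructor <;> nlinarith
  have hSne : S.Nonempty := by
    obtain ⟨i⟩ := (inferInstance : Nonempty V)
    exact ⟨Pi.single i 1, by simp [S]⟩
  have hqc : Continuous q := by
    simp only [q]
    unfold Matrix.mulVec dotProduct
    fun_prop
  obtain ⟨v, hvS, hvmax⟩ := hScomp.exists_isMaxOn hSne hqc.continuousOn
  set l := q v with hl
  have hmax : ∀ z ∈ S, q z ≤ l := fun z hz => hvmax hz
  have hRay : ∀ z : V → ℝ, q z ≤ l * (z ⬝ᵥ z) := by
    intro z
    by_cases h0 : z = 0
    · subst h0; simp [q]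
    have hpos : 0 < z ⬝ᵥ z := by
      have h1 : 0 ≤ z ⬝ᵥ z := Finset.sum_nonneg fun i _ => mul_self_nonneg _
      rcases h1.lt_or_eq with h | h
      · exact h
      · exact absurd (dotProduct_self_eq_zero.1 h.symm) h0
    set s := Real.sqrt (z ⬝ᵥ z) with hs
    have hspos : 0 < s := Real.sqrt_pos.2 hpos
    have hs2 : s * s = z ⬝ᵥ z := Real.mul_self_sqrt hpos.le
    have h2 := hmax (s⁻¹ • z) (by
      simp only [S, Set.mem_ofPred_eq, smul_dotProduct, dotProduct_smul, smul_eq_mul, ← hs2]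
      field_simp)
    have h3 : q (s⁻¹ • z) = s⁻¹ * (s⁻¹ * q z) := by
      simp only [q, Matrix.mulVec_smul, smul_dotProduct, dotProduct_smul, smul_eq_mul]
    rw [h3] at h2
    have h4 : q z = (s * s) * (s⁻¹ * (s⁻¹ * q z)) := by field_simp
    rw [h4, ← hs2, mul_comm l]
    exact mul_le_mul_of_nonneg_left h2 (by positivity)
  let w : V → ℝ := fun i => |v i|
  have hw0 : ∀ i, 0 ≤ w i := fun i => abs_nonneg _
  have hwS : w ⬝ᵥ w = 1 := by
    have : v ⬝ᵥ v = 1 := hvS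
    rw [← this]
    simp [w, dotProduct]
  have hqw : l ≤ q w := by
    rw [hl]
    simp only [q, dotProduct, Matrix.mulVec, Finset.mul_sum]
    refine Finset.sum_le_sum fun i _ => Finset.sum_le_sum fun j _ => ?_
    calc v i * (R i j * v j) ≤ |v i * (R i j * v j)| := le_abs_self _
      _ = w i * (R i j * w j) := by rw [abs_mul, abs_mul, abs_of_nonneg (hRnn i j)]
  have hqwl : q w = l := le_antisymm (hmax w hwS) hqw
  have hl0 : 0 ≤ l := by
    rw [← hqwl]
    exact Finset.sum_nonneg fun i _ => mul_nonneg (hw0 i)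
      (Finset.sum_nonneg fun j _ => mul_nonneg (hRnn i j) (hw0 j))
  have hform : ∀ (m : ℝ) (z : V → ℝ),
      z ⬝ᵥ ((m • (1 : Matrix V V ℝ) - R).mulVec z) = m * (z ⬝ᵥ z) - q z := by
    intro m z
    simp only [q, Matrix.sub_mulVec, Matrix.smul_mulVec, Matrix.one_mulVec, dotProduct_sub,
      dotProduct_smul, smul_eq_mul]
  have hherm : ∀ m : ℝ, (m • (1 : Matrix V V ℝ) - R).IsHermitian := by
    intro m
    ext i j
    simp only [Matrix.conjTranspose_apply, Matrix.sub_apply, Matrix.smul_apply, star_trivial,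
      hRs i j, Matrix.one_apply, eq_comm]
  have hpsd : (l • (1 : Matrix V V ℝ) - R).PosSemidef := by
    refine Matrix.PosSemidef.of_dotProduct_mulVec_nonneg (hherm l) fun z => ?_
    rw [star_trivial, hform]
    linarith [hRay z]
  have hker : (l • (1 : Matrix V V ℝ) - R).mulVec w = 0 := by
    rw [← hpsd.dotProduct_mulVec_zero_iff, star_trivial, hform, hwS, hqwl]
    ring
  have hwne : w ≠ 0 := by
    intro h
    rw [h] at hwS
    simp at hwS
  refine ⟨l, hl0, ?_, ⟨w, hw0, hwne, ?_⟩, ?_⟩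
  · refine ⟨N.charpoly, N.charpoly_monic, ?_⟩
    have hdet : (l • (1 : Matrix V V ℝ) - R).det = 0 :=
      Matrix.exists_mulVec_eq_zero_iff.1 ⟨w, hwne, hker⟩
    have h1 : R.charpoly = N.charpoly.map (Int.castRingHom ℝ) :=
      Matrix.charpoly_map N (Int.castRingHom ℝ)
    have h2 := Matrix.eval_charpoly R l
    rw [h1, Polynomial.eval_map] at h2
    rw [show algebraMap ℤ ℝ = Int.castRingHom ℝ from rfl, h2, ← hdet]
    congr 1
    ext i j
    simp [Matrix.scalar_apply, Matrix.diagonal_apply, Matrix.one_apply]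
  · intro i
    have := congrFun hker i
    simp only [Matrix.sub_mulVec, Matrix.smul_mulVec, Matrix.one_mulVec, Pi.sub_apply,
      Pi.smul_apply, smul_eq_mul, Pi.zero_apply] at this
    have h2 : R.mulVec w i = ∑ j, (N i j : ℝ) * w j := rfl
    linarith
  · intro m hm
    have hdet : IsUnit (m • (1 : Matrix V V ℝ) - R).det := by
      rw [isUnit_iff_ne_zero]
      intro h
      obtain ⟨z, hz, hz0⟩ := Matrix.exists_mulVec_eq_zero_iff.2 h
      have h1 := hform m z
      rw [hz0, dotProduct_zero] at h1
      have h2 := hRay z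
      have h3 : 0 ≤ z ⬝ᵥ z := Finset.sum_nonneg fun i _ => mul_self_nonneg _
      have h4 : z ⬝ᵥ z = 0 := by nlinarith
      exact hz (dotProduct_self_eq_zero.1 h4)
    obtain ⟨z, hz⟩ : ∃ z, (m • (1 : Matrix V V ℝ) - R).mulVec z = fun _ => 1 :=
      ⟨(m • (1 : Matrix V V ℝ) - R)⁻¹.mulVec (fun _ => 1), by
        rw [Matrix.mulVec_mulVec, Matrix.mul_nonsing_inv _ hdet, Matrix.one_mulVec]⟩
    have hzi : ∀ i, m * z i = ∑ j, R i j * z j + 1 := by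
      intro i
      have := congrFun hz i
      simp only [Matrix.sub_mulVec, Matrix.smul_mulVec, Matrix.one_mulVec, Pi.sub_apply,
        Pi.smul_apply, smul_eq_mul] at this
      have h2 : R.mulVec z i = ∑ j, R i j * z j := rfl
      linarith
    have hmpos : 0 < m := lt_of_le_of_lt hl0 hm
    let y : V → ℝ := fun i => max (-(z i)) 0
    have hy0 : ∀ i, 0 ≤ y i := fun i => le_max_right _ _
    have hyz : ∀ i, -(y i) ≤ z i := fun i => by
      have := le_max_left (-(z i)) 0
      simp only [y]; linarith
    have hyy : ∀ i, y i * z i = -(y i * y i) := by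
      intro i
      simp only [y]
      rcases le_total (-(z i)) 0 with h | h
      · rw [max_eq_right h]; ring
      · rw [max_eq_left h]; ring
    have hy : y = 0 := by
      have e1 : ∀ i, m * (y i * y i) ≤ y i * ∑ j, R i j * y j := by
        intro i
        have a1 : -(∑ j, R i j * y j) ≤ ∑ j, R i j * z j := by
          rw [← Finset.sum_neg_distrib]
          refine Finset.sum_le_sum fun j _ => ?_
          nlinarith [hRnn i j, hyz j]
        have a2 : m * (y i * y i) = - (y i * (m * z i)) := by
          have := hyy i
          linear_combination m * this
        rw [a2, hzi i]
        nlinarith [hy0 i]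
      have e2 : m * (y ⬝ᵥ y) ≤ q y := by
        simp only [q, dotProduct, Matrix.mulVec, Finset.mul_sum]
        refine Finset.sum_le_sum fun i _ => ?_
        rw [← Finset.mul_sum]
        exact e1 i
      have h2 := hRay y
      have h3 : 0 ≤ y ⬝ᵥ y := Finset.sum_nonneg fun i _ => mul_self_nonneg _
      have h4 : y ⬝ᵥ y = 0 := by nlinarith
      exact dotProduct_self_eq_zero.1 h4
    have hz0 : ∀ i, 0 ≤ z i := fun i => by
      have := hyz i
      rw [hy] at this
      simpa using this
    refine ⟨z, fun i => ?_, fun i => ?_⟩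
    · have h1 : 0 ≤ ∑ j, R i j * z j := Finset.sum_nonneg fun j _ => mul_nonneg (hRnn i j) (hz0 j)
      have h2 := hzi i
      by_contra h
      push Not at h
      nlinarith
    · have := hzi i
      simp only [← hRij]
      linarith

/-- Every position lies in some interval of a division. -/
theorem exists_interval {t k : ℕ} (c : Fin (t + 1) → ℕ) (h0 : c 0 = 0) (hk : c (Fin.last t) = k)
    (p : ℕ) (hp : p < k) : ∃ i : Fin t, c i.castSucc ≤ p ∧ p < c i.succ := by
  by_contra hcon
  push Not at hcon
  have : ∀ i : Fin (t + 1), c i ≤ p := by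
    intro i
    induction i using Fin.induction with
    | zero => omega
    | succ i ih => exact hcon i ih
  have := this (Fin.last t)
  omega

theorem interval_unique {t : ℕ} (c : Fin (t + 1) → ℕ) (hc : Monotone c) (p : ℕ) (i j : Fin t)
    (hi : c i.castSucc ≤ p ∧ p < c i.succ) (hj : c j.castSucc ≤ p ∧ p < c j.succ) : i = j := by
  by_contra hne
  rcases lt_or_gt_of_ne hne with h | h
  · have : c i.succ ≤ c j.castSucc := hc (by
      rw [Fin.le_def]; simp only [Fin.val_succ, Fin.val_castSucc]; exact h)
    omega
  · have : c j.succ ≤ c i.castSucc := hc (by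
      rw [Fin.le_def]; simp only [Fin.val_succ, Fin.val_castSucc]; exact h)
    omega

/-- Upper bound for permutations with fixed gridding. -/
theorem card_fixed_gridding_le {t u n : ℕ} (M : Fin t → Fin u → ℤ)
    (hM : ∀ i j, M i j = 0 ∨ M i j = 1 ∨ M i j = -1)
    (c : Fin (t + 1) → ℕ) (r : Fin (u + 1) → ℕ)
    (m : ℝ) (x : Fin t → ℝ) (y : Fin u → ℝ) (hx : ∀ i, 0 < x i) (hy : ∀ j, 0 < y j)
    (h1 : ∀ i, (∑ j, if M i j = 0 then 0 else y j) ≤ m * x i)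
    (h2 : ∀ j, (∑ i, if M i j = 0 then 0 else x i) ≤ m * y j) :
    (Fintype.card {σ : Equiv.Perm (Fin n) // IsGridding M σ c r} : ℝ) ≤ (m ^ 2) ^ n := by
  by_cases hne : Nonempty {σ : Equiv.Perm (Fin n) // IsGridding M σ c r}
  swap
  · rw [not_nonempty_iff] at hne
    rw [Fintype.card_eq_zero]
    simp only [Nat.cast_zero]
    positivity
  obtain ⟨σ₀, hcm, hrm, hc0, hcn, hr0, hrn, -⟩ := hne
  choose col hcol using fun p : Fin n => exists_interval c hc0 hcn p p.2
  choose row hrow using fun p : Fin n => exists_interval r hr0 hrn p p.2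
  have hin : ∀ (σ : Equiv.Perm (Fin n)) p, InCell σ c r (col p) (row (σ p)) p := fun σ p =>
    ⟨(hcol p).1, (hcol p).2, (hrow (σ p)).1, (hrow (σ p)).2⟩
  have hwt : ∀ σ : Equiv.Perm (Fin n), IsGridding M σ c r → ∀ p, M (col p) (row (σ p)) ≠ 0 := by
    intro σ hσ p h0
    exact (hσ.2.2.2.2.2.2 (col p) (row (σ p))).1 h0 p (hin σ p)
  -- the encoding
  let Φ : {σ : Equiv.Perm (Fin n) // IsGridding M σ c r} →
      (Fin n → Fin u) × (Fin n → Fin t) := fun σ => (fun p => row (σ.1 p), fun v => col (σ.1.symm v))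
  have hΦ : Function.Injective Φ := by
    rintro ⟨σ, hσ⟩ ⟨τ, hτ⟩ h
    simp only [Φ, Prod.mk.injEq] at h
    obtain ⟨hf, hg⟩ := h
    have hf' : ∀ p, row (σ p) = row (τ p) := fun p => congrFun hf p
    have hg' : ∀ v, col (σ.symm v) = col (τ.symm v) := fun v => congrFun hg v
    apply Subtype.ext
    ext1 p₀
    show σ p₀ = τ p₀
    set i := col p₀ with hi
    set j := row (σ p₀) with hj
    let P := {p : Fin n // col p = i ∧ row (σ p) = j}
    let s : P → Fin n := fun p => σ p.1
    let s' : P → Fin n := fun p => τ p.1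
    have hr : Set.range s = Set.range s' := by
      ext v
      constructor
      · rintro ⟨⟨p, hp1, hp2⟩, rfl⟩
        refine ⟨⟨τ.symm (σ p), ?_, ?_⟩, ?_⟩
        · rw [← hg']; simpa using hp1
        · rw [hf']; simpa using hp2
        · simp [s, s']
      · rintro ⟨⟨p, hp1, hp2⟩, rfl⟩
        refine ⟨⟨σ.symm (τ p), ?_, ?_⟩, ?_⟩
        · rw [hg']; simpa using hp1
        · rw [hf'] at hp2; simpa using hp2
        · simp [s, s']
    have hcell : ∀ p : P, InCell σ c r i j p.1 := by
      rintro ⟨p, hp1, hp2⟩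
      have := hin σ p
      rwa [hp1, hp2] at this
    have hcell' : ∀ p : P, InCell τ c r i j p.1 := by
      rintro ⟨p, hp1, hp2⟩
      have := hin τ p
      rwa [hp1, ← hf', hp2] at this
    have hss : s = s' := by
      rcases hM i j with h | h | h
      · exact absurd h (hwt σ hσ p₀)
      · have m1 : StrictMono s := fun p q hpq =>
          (hσ.2.2.2.2.2.2 i j).2.1 h p.1 q.1 (hcell p) (hcell q) hpq
        have m2 : StrictMono s' := fun p q hpq =>
          (hτ.2.2.2.2.2.2 i j).2.1 h p.1 q.1 (hcell' p) (hcell' q) hpq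
        exact (StrictMono.range_inj m1 m2).1 hr
      · have m1 : StrictAnti s := fun p q hpq =>
          (hσ.2.2.2.2.2.2 i j).2.2 h p.1 q.1 (hcell p) (hcell q) hpq
        have m2 : StrictAnti s' := fun p q hpq =>
          (hτ.2.2.2.2.2.2 i j).2.2 h p.1 q.1 (hcell' p) (hcell' q) hpq
        have m1' : StrictMono (fun p => Fin.rev (s p)) := fun p q hpq => by
          have := m1 hpq
          simpa using this
        have m2' : StrictMono (fun p => Fin.rev (s' p)) := fun p q hpq => by
          have := m2 hpq
          simpa using this
        have hr' : Set.range (fun p => Fin.rev (s p)) = Set.range (fun p => Fin.rev (s' p)) := by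
          have e1 : (fun p => Fin.rev (s p)) = Fin.rev ∘ s := rfl
          have e2 : (fun p => Fin.rev (s' p)) = Fin.rev ∘ s' := rfl
          rw [e1, e2, Set.range_comp, Set.range_comp, hr]
        have := (StrictMono.range_inj m1' m2').1 hr'
        ext1 p
        exact Fin.rev_injective (congrFun this p)
    exact congrFun hss ⟨p₀, rfl, rfl⟩
  let w1 : (Fin n → Fin u) → ℝ := fun f => ∏ p, if M (col p) (f p) = 0 then 0 else y (f p)
  let w2 : (Fin n → Fin t) → ℝ := fun g => ∏ v, if M (g v) (row v) = 0 then 0 else x (g v)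
  have hw1 : ∀ f, 0 ≤ w1 f := fun f => Finset.prod_nonneg fun p _ => by
    split_ifs
    · exact le_rfl
    · exact (hy _).le
  have hw2 : ∀ f, 0 ≤ w2 f := fun f => Finset.prod_nonneg fun p _ => by
    split_ifs
    · exact le_rfl
    · exact (hx _).le
  let Z : ℝ := (∏ p, x (col p)) * ∏ v, y (row v)
  have hZ : 0 < Z := mul_pos (Finset.prod_pos fun p _ => hx _) (Finset.prod_pos fun p _ => hy _)
  have hwΦ : ∀ σ, w1 (Φ σ).1 * w2 (Φ σ).2 = Z := by
    rintro ⟨σ, hσ⟩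
    have e1 : w1 (Φ ⟨σ, hσ⟩).1 = ∏ v, y (row v) := by
      have : w1 (Φ ⟨σ, hσ⟩).1 = ∏ p, y (row (σ p)) :=
        Finset.prod_congr rfl fun p _ => if_neg (hwt σ hσ p)
      rw [this]
      exact Equiv.prod_comp σ (fun v => y (row v))
    have e2 : w2 (Φ ⟨σ, hσ⟩).2 = ∏ p, x (col p) := by
      have : w2 (Φ ⟨σ, hσ⟩).2 = ∏ v, x (col (σ.symm v)) :=
        Finset.prod_congr rfl fun v _ => if_neg (by simpa using hwt σ hσ (σ.symm v))
      rw [this]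
      exact Equiv.prod_comp σ.symm (fun p => x (col p))
    rw [e1, e2, mul_comm]
  have hsum : (Fintype.card {σ : Equiv.Perm (Fin n) // IsGridding M σ c r} : ℝ) * Z
      ≤ (m ^ 2) ^ n * Z := by
    calc (Fintype.card {σ : Equiv.Perm (Fin n) // IsGridding M σ c r} : ℝ) * Z
        = ∑ σ, w1 (Φ σ).1 * w2 (Φ σ).2 := by
          rw [Finset.sum_congr rfl fun σ _ => hwΦ σ]
          simp
      _ = ∑ fg ∈ Finset.univ.map ⟨Φ, hΦ⟩, w1 fg.1 * w2 fg.2 := by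
          rw [Finset.sum_map]; rfl
      _ ≤ ∑ fg : (Fin n → Fin u) × (Fin n → Fin t), w1 fg.1 * w2 fg.2 :=
          Finset.sum_le_sum_of_subset_of_nonneg (Finset.subset_univ _)
            fun fg _ _ => mul_nonneg (hw1 _) (hw2 _)
      _ = (∑ f, w1 f) * ∑ g, w2 g := by
          rw [Fintype.sum_prod_type, Finset.sum_mul_sum]
      _ = (∏ p : Fin n, ∑ j, if M (col p) j = 0 then 0 else y j) *
            ∏ v : Fin n, ∑ i, if M i (row v) = 0 then 0 else x i := by
          rw [Fintype.prod_sum, Fintype.prod_sum]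
      _ ≤ (∏ p : Fin n, m * x (col p)) * ∏ v : Fin n, m * y (row v) := by
          have n1 : ∀ i, 0 ≤ ∑ j, if M i j = 0 then 0 else y j := fun i =>
            Finset.sum_nonneg fun j _ => by
              split_ifs
              · exact le_rfl
              · exact (hy _).le
          have n2 : ∀ j, 0 ≤ ∑ i, if M i j = 0 then 0 else x i := fun j =>
            Finset.sum_nonneg fun j _ => by
              split_ifs
              · exact le_rfl
              · exact (hx _).le
          apply mul_le_mul
          · exact Finset.prod_le_prod (fun p _ => n1 _) fun p _ => h1 _
          · exact Finset.prod_le_prod (fun p _ => n2 _) fun p _ => h2 _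
          · exact Finset.prod_nonneg fun p _ => n2 _
          · exact Finset.prod_nonneg fun p _ => le_trans (n1 _) (h1 _)
      _ = (m ^ 2) ^ n * Z := by
          simp only [Finset.prod_mul_distrib, Finset.prod_const, Finset.card_univ, Fintype.card_fin,
            Z]
          ring
  exact le_of_mul_le_mul_right hsum hZ

theorem gridCount_le {t u n : ℕ} (M : Fin t → Fin u → ℤ)
    (hM : ∀ i j, M i j = 0 ∨ M i j = 1 ∨ M i j = -1)
    (m : ℝ) (x : Fin t → ℝ) (y : Fin u → ℝ) (hx : ∀ i, 0 < x i) (hy : ∀ j, 0 < y j)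
    (h1 : ∀ i, (∑ j, if M i j = 0 then 0 else y j) ≤ m * x i)
    (h2 : ∀ j, (∑ i, if M i j = 0 then 0 else x i) ≤ m * y j) :
    (gridCount M n : ℝ) ≤ ((n : ℝ) + 1) ^ (t + u + 2) * (m ^ 2) ^ n := by
  let D := (Fin (t + 1) → Fin (n + 1)) × (Fin (u + 1) → Fin (n + 1))
  let cc : D → Fin (t + 1) → ℕ := fun d i => d.1 i
  let rr : D → Fin (u + 1) → ℕ := fun d i => d.2 i
  have hle : gridCount M n ≤
      Fintype.card (Σ d : D, {σ : Equiv.Perm (Fin n) // IsGridding M σ (cc d) (rr d)}) := by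
    rw [gridCount, Nat.card_eq_fintype_card]
    refine Fintype.card_le_of_surjective
      (fun s => (⟨s.2.1, cc s.1, rr s.1, s.2.2⟩ : {σ : Equiv.Perm (Fin n) // InGridClass M σ})) ?_
    rintro ⟨σ, c, r, h⟩
    have hc : ∀ i, c i < n + 1 := fun i => by
      have := h.1 (Fin.le_last i)
      have := h.2.2.2.1
      omega
    have hr : ∀ i, r i < n + 1 := fun i => by
      have := h.2.1 (Fin.le_last i)
      have := h.2.2.2.2.2.1
      omega
    exact ⟨⟨(fun i => ⟨c i, hc i⟩, fun i => ⟨r i, hr i⟩), ⟨σ, h⟩⟩, rfl⟩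
  calc (gridCount M n : ℝ)
      ≤ (Fintype.card (Σ d : D, {σ : Equiv.Perm (Fin n) // IsGridding M σ (cc d) (rr d)}) : ℝ) := by
        exact_mod_cast hle
    _ = ∑ d : D, (Fintype.card {σ : Equiv.Perm (Fin n) // IsGridding M σ (cc d) (rr d)} : ℝ) := by
        rw [Fintype.card_sigma]; push_cast; rfl
    _ ≤ ∑ d : D, (m ^ 2) ^ n := Finset.sum_le_sum fun d _ =>
        card_fixed_gridding_le M hM _ _ m x y hx hy h1 h2
    _ = ((n : ℝ) + 1) ^ (t + u + 2) * (m ^ 2) ^ n := by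
        simp only [Finset.sum_const, Finset.card_univ, nsmul_eq_mul, D, Fintype.card_prod,
          Fintype.card_fun, Fintype.card_fin]
        push_cast
        ring

theorem words_ge {α ι κ : Type} [Fintype α] [Fintype ι] [Fintype κ]
    [DecidableEq α] [DecidableEq ι] [DecidableEq κ] (col : α → ι)
    (a : ι → κ → ℕ) (hcol : ∀ i, Fintype.card {p // col p = i} = ∑ j, a i j) :
    ∏ i, (∑ j, a i j).factorial ≤
      Fintype.card {f : α → κ // ∀ i j, Fintype.card {p // col p = i ∧ f p = j} = a i j} *
        ∏ i, ∏ j, (a i j).factorial := by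
  -- a base word
  have e : ∀ i, Nonempty ({p // col p = i} ≃ Σ j, Fin (a i j)) := fun i => by
    rw [← Fintype.card_eq, hcol, Fintype.card_sigma]
    simp
  replace e : ∀ i, {p // col p = i} ≃ Σ j, Fin (a i j) := fun i => (e i).some
  let f₀ : α → κ := fun p => (e (col p) ⟨p, rfl⟩).1
  have hf₀e : ∀ i (p : {p // col p = i}), f₀ p.1 = (e i p).1 := by
    rintro i ⟨p, rfl⟩
    rfl
  have hf₀ : ∀ i j, Fintype.card {p // col p = i ∧ f₀ p = j} = a i j := by
    intro i j
    have e1 : {p // col p = i ∧ f₀ p = j} ≃ {q : {p // col p = i} // f₀ q.1 = j} :=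
      (Equiv.subtypeSubtypeEquivSubtypeInter (fun p => col p = i) (fun p => f₀ p = j)).symm
    have e2 : {q : {p // col p = i} // f₀ q.1 = j} ≃ {s : Σ j, Fin (a i j) // s.1 = j} :=
      (e i).subtypeEquiv fun q => by rw [hf₀e]
    have e3 : {s : Σ j, Fin (a i j) // s.1 = j} ≃ Fin (a i j) :=
      Equiv.sigmaSubtype j
    rw [Fintype.card_congr ((e1.trans e2).trans e3), Fintype.card_fin]
  let H := {g : Equiv.Perm α // col ∘ g = col}
  let F := {f : α → κ // ∀ i j, Fintype.card {p // col p = i ∧ f p = j} = a i j}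
  have hH : Fintype.card H = ∏ i, (∑ j, a i j).factorial := by
    have := DomMulAct.stabilizer_card col
    rw [← Nat.card_eq_fintype_card] at this ⊢
    rw [this]
    refine Finset.prod_congr rfl fun i _ => ?_
    rw [← hcol i]
  have hS : Nat.card {g : Equiv.Perm α // (fun p => (col p, f₀ p)) ∘ g = (fun p => (col p, f₀ p))}
      = ∏ i, ∏ j, (a i j).factorial := by
    have := DomMulAct.stabilizer_card (fun p => (col p, f₀ p))
    rw [← Nat.card_eq_fintype_card] at this
    rw [this, Fintype.prod_prod_type]
    refine Finset.prod_congr rfl fun i _ => Finset.prod_congr rfl fun j _ => ?_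
    rw [← hf₀ i j]
    congr 1
    refine Fintype.card_congr (Equiv.subtypeEquivRight fun p => ?_)
    simp
  have hcolg : ∀ (g : H) p, col (g.1 p) = col p := fun g p => congrFun g.2 p
  let Ψ : H → F := fun g => ⟨f₀ ∘ g.1, fun i j => by
    rw [← hf₀ i j]
    refine Fintype.card_congr (g.1.subtypeEquiv fun p => ?_)
    rw [hcolg]
    rfl⟩
  have hfib : ∀ f ∈ (Finset.univ : Finset F),
      (Finset.univ.filter fun g => Ψ g = f).card ≤ ∏ i, ∏ j, (a i j).factorial := by
    intro f _
    rcases (Finset.univ.filter fun g => Ψ g = f).eq_empty_or_nonempty with h | ⟨g₁, hg₁⟩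
    · rw [h]; simp
    · rw [← hS, Nat.card_eq_fintype_card, ← Finset.card_univ]
      have hg₁' : Ψ g₁ = f := (Finset.mem_filter.1 hg₁).2
      have hE : ∀ g : H, Ψ g = f → (fun p => (col p, f₀ p)) ∘ (g₁.1⁻¹.trans g.1) =
          (fun p => (col p, f₀ p)) := by
        intro g hg
        have hh : ∀ p, f₀ (g.1 p) = f₀ (g₁.1 p) := by
          have : Ψ g = Ψ g₁ := hg.trans hg₁'.symm
          have := congrArg Subtype.val this
          exact fun p => congrFun this p
        funext p
        have h1 := hcolg g (g₁.1.symm p)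
        have h2 := hcolg g₁ (g₁.1.symm p)
        have h3 := hh (g₁.1.symm p)
        rw [Equiv.apply_symm_apply] at h2 h3
        show (col (g.1 (g₁.1.symm p)), f₀ (g.1 (g₁.1.symm p))) = (col p, f₀ p)
        rw [h1, h3, h2]
      refine Finset.card_le_card_of_injOn
        (fun g => if h : Ψ g = f then ⟨g₁.1⁻¹.trans g.1, hE g h⟩ else ⟨1, rfl⟩)
        (fun _ _ => Finset.mem_univ _) ?_
      intro g hg g' hg' hgg
      have k1 : Ψ g = f := by simpa using hg
      have k2 : Ψ g' = f := by simpa using hg'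
      simp only [k1, k2, dif_pos, Subtype.mk.injEq] at hgg
      apply Subtype.ext
      ext1 p
      have := congrArg (fun q : Equiv.Perm α => q (g₁.1 p)) hgg
      simpa using this
  rw [← hH]
  have := Finset.card_le_mul_card_image_of_maps_to (s := (Finset.univ : Finset H))
    (t := (Finset.univ : Finset F)) (f := Ψ) (fun _ _ => Finset.mem_univ _) _ hfib
  rw [Finset.card_univ, Finset.card_univ, mul_comm] at this
  exact this

theorem exists_division {t n : ℕ} (A : Fin t → ℕ) (h : ∑ i, A i = n) :
    ∃ c : Fin (t + 1) → ℕ, Monotone c ∧ c 0 = 0 ∧ c (Fin.last t) = n ∧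
      ∃ col : Fin n → Fin t,
        (∀ p i, col p = i ↔ c i.castSucc ≤ (p : ℕ) ∧ (p : ℕ) < c i.succ) ∧
        ∀ i, Fintype.card {p // col p = i} = A i := by
  let c : Fin (t + 1) → ℕ := fun i => ∑ k : Fin t with k.castSucc < i, A k
  have hmono : Monotone c := by
    intro i j hij
    refine Finset.sum_le_sum_of_subset fun k hk => ?_
    simp only [Finset.mem_filter, Finset.mem_univ, true_and] at hk ⊢
    exact lt_of_lt_of_le hk hij
  have h0 : c 0 = 0 := by simp [c]
  have hn : c (Fin.last t) = n := by
    simp only [c, Fin.castSucc_lt_last, Finset.filter_true, h]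
  have hsucc : ∀ i : Fin t, c i.succ = c i.castSucc + A i := by
    intro i
    have : (Finset.univ.filter fun k : Fin t => k.castSucc < i.succ) =
        insert i (Finset.univ.filter fun k : Fin t => k.castSucc < i.castSucc) := by
      ext k
      simp only [Finset.mem_filter, Finset.mem_univ, true_and, Finset.mem_insert,
        Fin.lt_def, Fin.val_castSucc, Fin.val_succ, Fin.ext_iff]
      omega
    simp only [c]
    rw [this, Finset.sum_insert (by simp), add_comm]
  choose col hcol using fun p : Fin n => exists_interval c h0 hn p p.2
  have hiff : ∀ p i, col p = i ↔ c i.castSucc ≤ (p : ℕ) ∧ (p : ℕ) < c i.succ := by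
    intro p i
    constructor
    · rintro rfl; exact hcol p
    · intro hi
      exact interval_unique c hmono p _ _ (hcol p) hi
  refine ⟨c, hmono, h0, hn, col, hiff, fun i => ?_⟩
  have hle : c i.succ ≤ n := hn ▸ hmono (Fin.le_last _)
  have e : {p // col p = i} ≃ Fin (A i) :=
    { toFun := fun p => ⟨p.1 - c i.castSucc, by
        have := (hiff p.1 i).1 p.2
        have := hsucc i
        omega⟩
      invFun := fun k => ⟨⟨c i.castSucc + k, by
        have := hsucc i
        have := k.2
        omega⟩, by
        rw [hiff]
        have := hsucc i
        have := k.2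
        constructor <;> simp only <;> omega⟩
      left_inv := by
        rintro ⟨p, hp⟩
        have := (hiff p i).1 hp
        apply Subtype.ext
        apply Fin.ext
        simp only
        omega
      right_inv := by
        intro k
        apply Fin.ext
        simp }
  rw [Fintype.card_congr e, Fintype.card_fin]

/-- Any two finite linear orders of the same size are related by an increasing
(or decreasing) bijection. -/
theorem exists_fiber_equiv {P V : Type} [Fintype P] [Fintype V] [LinearOrder P] [LinearOrder V]
    (h : Fintype.card P = Fintype.card V) (s : ℤ) :
    ∃ e : P ≃ V, (s = 1 → StrictMono e) ∧ (s = -1 → StrictAnti e) := by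
  let e1 : Fin (Fintype.card P) ≃o P := Fintype.orderIsoFinOfCardEq P rfl
  let e2 : Fin (Fintype.card P) ≃o V := Fintype.orderIsoFinOfCardEq V h.symm
  by_cases hs : s = 1
  · refine ⟨e1.symm.toEquiv.trans e2.toEquiv, fun _ => ?_, fun h => by omega⟩
    exact e2.strictMono.comp e1.symm.strictMono
  · refine ⟨e1.symm.toEquiv.trans (Fin.revPerm.trans e2.toEquiv), fun h => absurd h hs, fun _ => ?_⟩
    intro p q hpq
    apply e2.strictMono
    have := e1.symm.strictMono hpq
    simpa using this

theorem gridCount_ge {t u n : ℕ} (M : Fin t → Fin u → ℤ)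
    (a : Fin t → Fin u → ℕ) (ha0 : ∀ i j, M i j = 0 → a i j = 0) (hsum : ∑ i, ∑ j, a i j = n) :
    (∏ i, (∑ j, a i j).factorial) * (∏ j, (∑ i, a i j).factorial) ≤
      gridCount M n * (∏ i, ∏ j, (a i j).factorial) ^ 2 := by
  obtain ⟨c, hcm, hc0, hcn, col, hcol, hcard⟩ := exists_division (fun i => ∑ j, a i j) hsum
  obtain ⟨r, hrm, hr0, hrn, row, hrow, hrcard⟩ := exists_division (n := n) (fun j => ∑ i, a i j)
    (by rw [← hsum, Finset.sum_comm])
  have w1 := words_ge col a hcard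
  have w2 := words_ge row (fun j i => a i j) hrcard
  let F := {f : Fin n → Fin u // ∀ i j, Fintype.card {p // col p = i ∧ f p = j} = a i j}
  let G := {g : Fin n → Fin t // ∀ j i, Fintype.card {v // row v = j ∧ g v = i} = a i j}
  have key : ∀ (f : F) (g : G), ∃ σ : Equiv.Perm (Fin n), IsGridding M σ c r ∧
      ∀ p, row (σ p) = f.1 p ∧ g.1 (σ p) = col p := by
    rintro ⟨f, hf⟩ ⟨g, hg⟩
    let φ : Fin n → Fin t × Fin u := fun p => (col p, f p)
    let ψ : Fin n → Fin t × Fin u := fun v => (g v, row v)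
    have hce : ∀ x : Fin t × Fin u, Fintype.card {p // φ p = x} = Fintype.card {v // ψ v = x} := by
      rintro ⟨i, j⟩
      have h1 : Fintype.card {p // φ p = (i, j)} = a i j := by
        rw [← hf i j]
        refine Fintype.card_congr (Equiv.subtypeEquivRight fun p => ?_)
        simp [φ]
      have h2 : Fintype.card {p // ψ p = (i, j)} = a i j := by
        rw [← hg j i]
        refine Fintype.card_congr (Equiv.subtypeEquivRight fun p => ?_)
        simp [ψ, and_comm]
      rw [h1, h2]
    choose e he1 he2 using fun x : Fin t × Fin u => exists_fiber_equiv (hce x) (M x.1 x.2)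
    let σ : Equiv.Perm (Fin n) :=
      (Equiv.sigmaFiberEquiv φ).symm.trans
        ((Equiv.sigmaCongrRight e).trans (Equiv.sigmaFiberEquiv ψ))
    have hσ : ∀ x (p : {p // φ p = x}), σ p.1 = (e x p).1 := by
      rintro x ⟨p, rfl⟩
      rfl
    have hσψ : ∀ p, ψ (σ p) = φ p := by
      intro p
      rw [hσ (φ p) ⟨p, rfl⟩]
      exact (e (φ p) ⟨p, rfl⟩).2
    have hrc : ∀ p, row (σ p) = f p ∧ g (σ p) = col p := by
      intro p
      have := hσψ p
      simp only [ψ, φ, Prod.mk.injEq] at this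
      exact ⟨this.2, this.1⟩
    have hcell : ∀ i j p, InCell σ c r i j p → φ p = (i, j) := by
      intro i j p hp
      have h1 : col p = i := (hcol p i).2 ⟨hp.1, hp.2.1⟩
      have h2 : row (σ p) = j := (hrow (σ p) j).2 ⟨hp.2.2.1, hp.2.2.2⟩
      rw [(hrc p).1] at h2
      simp [φ, h1, h2]
    refine ⟨σ, ⟨hcm, hrm, hc0, hcn, hr0, hrn, fun i j => ⟨?_, ?_, ?_⟩⟩, hrc⟩
    · intro hM p hp
      have h1 := hf i j
      rw [ha0 i j hM, Fintype.card_eq_zero_iff] at h1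
      have h2 := hcell i j p hp
      simp only [φ, Prod.mk.injEq] at h2
      exact h1.false ⟨p, h2⟩
    · intro hM p q hp hq hpq
      have := he1 (i, j) hM (a := ⟨p, hcell i j p hp⟩) (b := ⟨q, hcell i j q hq⟩) hpq
      rw [hσ (i, j) ⟨p, hcell i j p hp⟩, hσ (i, j) ⟨q, hcell i j q hq⟩]
      exact this
    · intro hM p q hp hq hpq
      have := he2 (i, j) hM (a := ⟨p, hcell i j p hp⟩) (b := ⟨q, hcell i j q hq⟩) hpq
      rw [hσ (i, j) ⟨p, hcell i j p hp⟩, hσ (i, j) ⟨q, hcell i j q hq⟩]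
      exact this
  choose σ hσ1 hσ2 using key
  have hFG : Fintype.card F * Fintype.card G ≤ gridCount M n := by
    rw [← Fintype.card_prod, gridCount, Nat.card_eq_fintype_card]
    refine Fintype.card_le_of_injective (fun x : F × G =>
      (⟨σ x.1 x.2, c, r, hσ1 x.1 x.2⟩ : {σ : Equiv.Perm (Fin n) // InGridClass M σ})) ?_
    rintro ⟨f, g⟩ ⟨f', g'⟩ h
    have hs : σ f g = σ f' g' := congrArg Subtype.val h
    have k1 : f = f' := by
      apply Subtype.ext
      funext p
      rw [← (hσ2 f g p).1, ← (hσ2 f' g' p).1, hs]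
    have k2 : g = g' := by
      apply Subtype.ext
      funext v
      have q1 := (hσ2 f g ((σ f g).symm v)).2
      have q2 := (hσ2 f' g' ((σ f' g').symm v)).2
      rw [Equiv.apply_symm_apply] at q1 q2
      rw [q1, q2, hs]
    rw [k1, k2]
  calc (∏ i, (∑ j, a i j).factorial) * (∏ j, (∑ i, a i j).factorial)
      ≤ (Fintype.card F * ∏ i, ∏ j, (a i j).factorial) *
          (Fintype.card G * ∏ j, ∏ i, (a i j).factorial) := by
        refine Nat.mul_le_mul ?_ ?_
        · convert w1
        · convert w2
    _ = (Fintype.card F * Fintype.card G) * (∏ i, ∏ j, (a i j).factorial) ^ 2 := by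
        rw [Finset.prod_comm (s := (Finset.univ : Finset (Fin u)))]
        ring
    _ ≤ _ := Nat.mul_le_mul_right _ hFG

theorem log_factorial_err (m : ℕ) :
    0 ≤ Real.log (m.factorial : ℝ) - (m * Real.log m - m) ∧
      Real.log (m.factorial : ℝ) - (m * Real.log m - m) ≤ 1 + Real.log (m + 1) := by
  rcases Nat.eq_zero_or_pos m with h | h
  · subst h; simp
  have hm : (0 : ℝ) < m := by exact_mod_cast h
  constructor
  · have h1 := Real.pow_div_factorial_le_exp (m : ℝ) hm.le m
    have h2 := Real.log_le_log (by positivity) h1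
    rw [Real.log_exp, Real.log_div (by positivity) (by positivity), Real.log_pow] at h2
    linarith
  · obtain ⟨k, rfl⟩ : ∃ k, m = k + 1 := ⟨m - 1, by omega⟩
    have h1 := Stirling.log_stirlingSeq'_antitone (Nat.zero_le k)
    simp only [Function.comp_apply, Nat.succ_eq_add_one, zero_add] at h1
    rw [Stirling.log_stirlingSeq_formula, Stirling.log_stirlingSeq_formula] at h1
    rw [Real.log_div hm.ne' (Real.exp_pos 1).ne', Real.log_exp,
      Real.log_mul two_ne_zero hm.ne'] at h1
    simp at h1
    have h2 : Real.log ((k + 1 : ℕ) : ℝ) ≤ Real.log (((k + 1 : ℕ) : ℝ) + 1) :=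
      Real.log_le_log hm (by linarith)
    have h3 : 0 ≤ Real.log ((k + 1 : ℕ) : ℝ) := Real.log_nonneg (by exact_mod_cast h)
    push_cast at *
    linarith

theorem tendsto_log_add_one_div : Tendsto (fun n : ℕ => (1 + Real.log ((n : ℝ) + 1)) / n)
    atTop (nhds 0) := by
  have h1 : Tendsto (fun n : ℕ => Real.log ((n : ℝ) + 1) / ((n : ℝ) + 1)) atTop (nhds 0) := by
    have := (Real.isLittleO_log_id_atTop.tendsto_div_nhds_zero).comp
      (tendsto_atTop_add_const_right atTop (1 : ℝ) tendsto_natCast_atTop_atTop)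
    exact this
  have h2 : Tendsto (fun n : ℕ => (1 : ℝ) / n) atTop (nhds 0) :=
    tendsto_one_div_atTop_nhds_zero_nat
  have h3 : Tendsto (fun n : ℕ => (1 : ℝ) / n + Real.log ((n : ℝ) + 1) / ((n : ℝ) + 1) *
      (1 + 1 / n)) atTop (nhds (0 + 0 * (1 + 0))) :=
    h2.add (h1.mul (tendsto_const_nhds.add h2))
  have e0 : (0 : ℝ) + 0 * (1 + 0) = 0 := by ring
  rw [e0] at h3
  refine h3.congr' ?_
  filter_upwards [eventually_gt_atTop 0] with n hn
  have : (0 : ℝ) < n := by exact_mod_cast hn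
  field_simp
  

theorem tendsto_log_factorial (b : ℕ → ℕ) (hb : ∀ n, b n ≤ n) (β : ℝ)
    (h : Tendsto (fun n => (b n : ℝ) / n) atTop (nhds β)) :
    Tendsto (fun n => (Real.log ((b n).factorial : ℝ) - b n * Real.log n + b n) / n) atTop
      (nhds (β * Real.log β)) := by
  have h1 : Tendsto (fun n => (b n : ℝ) / n * Real.log ((b n : ℝ) / n)) atTop
      (nhds (β * Real.log β)) := (Real.continuous_mul_log.tendsto β).comp h
  have h2 : Tendsto (fun n => (Real.log ((b n).factorial : ℝ) -
      (b n * Real.log (b n) - b n)) / n) atTop (nhds 0) := by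
    refine squeeze_zero (fun n => ?_) (fun n => ?_) tendsto_log_add_one_div
    · exact div_nonneg (log_factorial_err _).1 (Nat.cast_nonneg _)
    · refine div_le_div_of_nonneg_right ((log_factorial_err _).2.trans ?_) (Nat.cast_nonneg _)
      have : (b n : ℝ) ≤ n := by exact_mod_cast hb n
      have := Real.log_le_log (by positivity : (0 : ℝ) < (b n : ℝ) + 1) (by linarith :
        (b n : ℝ) + 1 ≤ n + 1)
      linarith
  have h3 := h1.add h2
  rw [add_zero] at h3
  refine h3.congr' ?_
  filter_upwards [eventually_gt_atTop 0] with n hn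
  have hn' : (0 : ℝ) < n := by exact_mod_cast hn
  rcases Nat.eq_zero_or_pos (b n) with h0 | h0
  · rw [h0]; simp
  · have hb' : (0 : ℝ) < b n := by exact_mod_cast h0
    rw [Real.log_div hb'.ne' hn'.ne']
    field_simp
    ring

theorem exists_approx {ι : Type} [Fintype ι] (α : ι → ℝ) (h0 : ∀ i, 0 ≤ α i) (h1 : ∑ i, α i = 1) :
    ∃ a : ℕ → ι → ℕ, (∀ n, ∑ i, a n i = n) ∧ (∀ n i, α i = 0 → a n i = 0) ∧
      ∀ i, Tendsto (fun n => (a n i : ℝ) / n) atTop (nhds (α i)) := by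
  obtain ⟨e, he⟩ : ∃ e, α e ≠ 0 := by
    by_contra hcon
    push Not at hcon
    simp [hcon] at h1
  let s : ℕ → ℕ := fun n => ∑ k, ⌊α k * n⌋₊
  have hs : ∀ n, s n ≤ n := by
    intro n
    have : (s n : ℝ) ≤ n := by
      simp only [s]
      push_cast
      calc ∑ k, (⌊α k * n⌋₊ : ℝ) ≤ ∑ k, α k * n := Finset.sum_le_sum fun k _ =>
            Nat.floor_le (mul_nonneg (h0 k) (Nat.cast_nonneg n))
        _ = n := by rw [← Finset.sum_mul, h1, one_mul]
    exact_mod_cast this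
  have hfl : ∀ i, Tendsto (fun n : ℕ => (⌊α i * n⌋₊ : ℝ) / n) atTop (nhds (α i)) := fun i =>
    (tendsto_nat_floor_mul_div_atTop (h0 i)).comp tendsto_natCast_atTop_atTop
  have hst : Tendsto (fun n : ℕ => ((n - s n : ℕ) : ℝ) / n) atTop (nhds 0) := by
    have k1 : Tendsto (fun n : ℕ => 1 - ∑ k, (⌊α k * n⌋₊ : ℝ) / n) atTop
        (nhds (1 - ∑ k, α k)) :=
      tendsto_const_nhds.sub (tendsto_finsetSum _ fun k _ => hfl k)
    rw [h1, sub_self] at k1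
    refine k1.congr' ?_
    filter_upwards [eventually_gt_atTop 0] with n hn
    have hn' : (0 : ℝ) < n := by exact_mod_cast hn
    rw [Nat.cast_sub (hs n), sub_div, div_self hn'.ne', ← Finset.sum_div]
    simp only [s]
    push_cast
    rfl
  refine ⟨fun n i => ⌊α i * n⌋₊ + if i = e then n - s n else 0, ?_, ?_, ?_⟩
  · intro n
    rw [Finset.sum_add_distrib, Finset.sum_ite_eq']
    simp only [Finset.mem_univ, if_true]
    have := hs n
    simp only [s] at this ⊢
    omega
  · intro n i hi
    have : i ≠ e := fun h => he (h ▸ hi)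
    simp [hi, this]
  · intro i
    by_cases hi : i = e
    · simp only [hi, if_true]
      have := (hfl e).add hst
      rw [add_zero] at this
      refine this.congr fun n => ?_
      push_cast
      ring
    · simp only [hi, if_false, add_zero]
      exact hfl i

theorem lower_bound {t u : ℕ} (M : Fin t → Fin u → ℤ) (α : Fin t → Fin u → ℝ)
    (h0 : ∀ i j, 0 ≤ α i j) (h1 : ∑ i, ∑ j, α i j = 1) (hα : ∀ i j, M i j = 0 → α i j = 0) :
    ∃ s : ℕ → ℝ, Tendsto s atTop (nhds (Real.exp (
        ∑ i, (∑ j, α i j) * Real.log (∑ j, α i j) + ∑ j, (∑ i, α i j) * Real.log (∑ i, α i j)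
          - 2 * ∑ i, ∑ j, α i j * Real.log (α i j)))) ∧
      ∀ n : ℕ, 0 < n → s n ≤ (gridCount M n : ℝ) ^ (1 / (n : ℝ)) := by
  obtain ⟨a', ha1, ha2, ha3⟩ := exists_approx (fun x : Fin t × Fin u => α x.1 x.2)
    (fun x => h0 _ _) (by rw [Fintype.sum_prod_type]; exact h1)
  let a : ℕ → Fin t → Fin u → ℕ := fun n i j => a' n (i, j)
  have hsum : ∀ n, ∑ i, ∑ j, a n i j = n := fun n => by
    rw [← Fintype.sum_prod_type' (fun i j => a n i j)]; exact ha1 n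
  have hsum' : ∀ n, ∑ j, ∑ i, a n i j = n := fun n => by
    rw [Finset.sum_comm]; exact hsum n
  have hlim : ∀ i j, Tendsto (fun n => (a n i j : ℝ) / n) atTop (nhds (α i j)) :=
    fun i j => ha3 (i, j)
  have hA : ∀ n i, ∑ j, a n i j ≤ n := fun n i => by
    conv_rhs => rw [← hsum n]
    exact Finset.single_le_sum (f := fun i => ∑ j, a n i j) (fun _ _ => Nat.zero_le _)
      (Finset.mem_univ i)
  have hA' : ∀ n j, ∑ i, a n i j ≤ n := fun n j => by
    conv_rhs => rw [← hsum' n]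
    exact Finset.single_le_sum (f := fun j => ∑ i, a n i j) (fun _ _ => Nat.zero_le _)
      (Finset.mem_univ j)
  have ha : ∀ n i j, a n i j ≤ n := fun n i j =>
    (Finset.single_le_sum (f := fun j => a n i j) (fun _ _ => Nat.zero_le _)
      (Finset.mem_univ j)).trans (hA n i)
  let L : ℕ → ℕ → ℝ := fun n b => (Real.log (b.factorial : ℝ) - b * Real.log n + b) / n
  have t1 : ∀ i, Tendsto (fun n => L n (∑ j, a n i j)) atTop
      (nhds ((∑ j, α i j) * Real.log (∑ j, α i j))) := fun i => by
    refine tendsto_log_factorial (fun n => ∑ j, a n i j) (fun n => hA n i) _ ?_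
    refine (tendsto_finsetSum Finset.univ fun j _ => hlim i j).congr fun n => ?_
    rw [← Finset.sum_div]; push_cast; rfl
  have t2 : ∀ j, Tendsto (fun n => L n (∑ i, a n i j)) atTop
      (nhds ((∑ i, α i j) * Real.log (∑ i, α i j))) := fun j => by
    refine tendsto_log_factorial (fun n => ∑ i, a n i j) (fun n => hA' n j) _ ?_
    refine (tendsto_finsetSum Finset.univ fun i _ => hlim i j).congr fun n => ?_
    rw [← Finset.sum_div]; push_cast; rfl
  have t3 : ∀ i j, Tendsto (fun n => L n (a n i j)) atTop
      (nhds (α i j * Real.log (α i j))) := fun i j =>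
    tendsto_log_factorial (fun n => a n i j) (fun n => ha n i j) _ (hlim i j)
  have T := ((tendsto_finsetSum Finset.univ fun i _ => t1 i).add
    (tendsto_finsetSum Finset.univ fun j _ => t2 j)).sub
    ((tendsto_finsetSum Finset.univ fun i _ => tendsto_finsetSum Finset.univ
      fun j _ => t3 i j).const_mul 2)
  refine ⟨_, (Real.continuous_exp.tendsto _).comp T, ?_⟩
  intro n hn
  have hn' : (0 : ℝ) < n := by exact_mod_cast hn
  have hge := gridCount_ge M (a n) (fun i j h => ha2 n (i, j) (hα i j h)) (hsum n)
  have hpos : 0 < gridCount M n := by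
    rcases Nat.eq_zero_or_pos (gridCount M n) with h | h
    · rw [h, zero_mul] at hge
      have : 0 < (∏ i, (∑ j, a n i j).factorial) * (∏ j, (∑ i, a n i j).factorial) :=
        mul_pos (Finset.prod_pos fun i _ => Nat.factorial_pos _)
          (Finset.prod_pos fun i _ => Nat.factorial_pos _)
      omega
    · exact h
  have hpos' : (0 : ℝ) < gridCount M n := by exact_mod_cast hpos
  have hne : ∀ m : ℕ, (m.factorial : ℝ) ≠ 0 := fun m => by exact_mod_cast m.factorial_ne_zero
  have hge' : ∑ i, Real.log ((∑ j, a n i j).factorial : ℝ) +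
      ∑ j, Real.log ((∑ i, a n i j).factorial : ℝ) ≤
      Real.log (gridCount M n) + 2 * ∑ i, ∑ j, Real.log ((a n i j).factorial : ℝ) := by
    have hc : ((∏ i, ((∑ j, a n i j).factorial : ℝ)) * (∏ j, ((∑ i, a n i j).factorial : ℝ))) ≤
      gridCount M n * (∏ i, ∏ j, ((a n i j).factorial : ℝ)) ^ 2 := by exact_mod_cast hge
    have hp1 : (∏ i, ((∑ j, a n i j).factorial : ℝ)) ≠ 0 := Finset.prod_ne_zero_iff.2 fun i _ => hne _
    have hp2 : (∏ j, ((∑ i, a n i j).factorial : ℝ)) ≠ 0 := Finset.prod_ne_zero_iff.2 fun i _ => hne _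
    have hp4 : ∀ i, (∏ j, ((a n i j).factorial : ℝ)) ≠ 0 :=
      fun i => Finset.prod_ne_zero_iff.2 fun i _ => hne _
    have hp3 : (∏ i, ∏ j, ((a n i j).factorial : ℝ)) ≠ 0 :=
      Finset.prod_ne_zero_iff.2 fun i _ => hp4 i
    have := Real.log_le_log (by positivity) hc
    rw [Real.log_mul hp1 hp2, Real.log_mul hpos'.ne' (pow_ne_zero 2 hp3), Real.log_pow,
      Real.log_prod (fun i _ => hne _), Real.log_prod (fun i _ => hne _),
      Real.log_prod (fun i _ => hp4 i)] at this
    rw [Finset.sum_congr rfl fun i _ => Real.log_prod (fun j _ => hne (a n i j))] at this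
    exact_mod_cast this
  have hLs : ∀ {ι : Type} [Fintype ι] (b : ι → ℕ), ∑ i, L n (b i) =
      (∑ i, Real.log ((b i).factorial : ℝ) - ((∑ i, b i : ℕ) : ℝ) * Real.log n +
        ((∑ i, b i : ℕ) : ℝ)) / n := by
    intro ι _ b
    simp only [L]
    push_cast
    rw [← Finset.sum_div, Finset.sum_add_distrib, Finset.sum_sub_distrib, Finset.sum_mul]
  have b1 := hLs (fun i => ∑ j, a n i j)
  have b2 := hLs (fun j => ∑ i, a n i j)
  have b3 := hLs (fun x : Fin t × Fin u => a n x.1 x.2)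
  rw [Fintype.sum_prod_type, Fintype.sum_prod_type, Fintype.sum_prod_type] at b3
  simp only [hsum, hsum'] at b1 b2 b3
  rw [Real.rpow_def_of_pos hpos']
  simp only [Function.comp_apply]
  apply Real.exp_le_exp.2
  rw [b1, b2, b3, ← mul_div_assoc, ← add_div, ← sub_div, mul_one_div]
  refine div_le_div_of_nonneg_right ?_ hn'.le
  linarith

theorem entropy_value {t u : ℕ} (B : Fin t → Fin u → ℝ) (hB : ∀ i j, B i j = 0 ∨ B i j = 1)
    (l : ℝ) (hl : 0 < l) (x : Fin t → ℝ) (y : Fin u → ℝ)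
    (h1 : ∀ i, ∑ j, B i j * y j = l * x i)
    (h2 : ∀ j, ∑ i, B i j * x i = l * y j)
    (Z : ℝ) (hZ : 0 < Z) (α : Fin t → Fin u → ℝ) (hα : ∀ i j, α i j = B i j * x i * y j / Z)
    (hone : ∑ i, ∑ j, α i j = 1) :
    Real.exp (
        ∑ i, (∑ j, α i j) * Real.log (∑ j, α i j) + ∑ j, (∑ i, α i j) * Real.log (∑ i, α i j)
          - 2 * ∑ i, ∑ j, α i j * Real.log (α i j)) = l ^ 2 := by
  have e1 : ∀ i, ∑ j, α i j = l * x i ^ 2 / Z := by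
    intro i
    simp only [hα]
    rw [← Finset.sum_div, Finset.sum_congr rfl fun j _ =>
      (show B i j * x i * y j = x i * (B i j * y j) by ring), ← Finset.mul_sum, h1]
    ring
  have e2 : ∀ j, ∑ i, α i j = l * y j ^ 2 / Z := by
    intro j
    simp only [hα]
    rw [← Finset.sum_div, ← Finset.sum_mul, h2]
    ring
  have e3 : ∑ i, (∑ j, α i j) * Real.log (∑ j, α i j) =
      ∑ i, ∑ j, α i j * Real.log (l * x i ^ 2 / Z) := by
    refine Finset.sum_congr rfl fun i _ => ?_
    rw [Finset.sum_mul]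
    simp only [e1]
  have e4 : ∑ j, (∑ i, α i j) * Real.log (∑ i, α i j) =
      ∑ i, ∑ j, α i j * Real.log (l * y j ^ 2 / Z) := by
    rw [Finset.sum_comm]
    refine Finset.sum_congr rfl fun j _ => ?_
    rw [Finset.sum_mul]
    simp only [e2]
  rw [e3, e4, Finset.mul_sum, ← Finset.sum_add_distrib, ← Finset.sum_sub_distrib]
  have e5 : ∀ i j, α i j * Real.log (l * x i ^ 2 / Z) + α i j * Real.log (l * y j ^ 2 / Z) -
      2 * (α i j * Real.log (α i j)) = α i j * Real.log (l ^ 2) := by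
    intro i j
    by_cases h : α i j = 0
    · rw [h]; ring
    have hb : B i j ≠ 0 := fun h' => h (by rw [hα, h']; ring)
    have hx : x i ≠ 0 := fun h' => h (by rw [hα, h']; ring)
    have hy : y j ≠ 0 := fun h' => h (by rw [hα, h']; ring)
    have hb1 : B i j = 1 := (hB i j).resolve_left hb
    rw [hα i j, hb1, one_mul, Real.log_div (by positivity) hZ.ne', Real.log_div (by positivity) hZ.ne',
      Real.log_div (by positivity) hZ.ne', Real.log_mul hl.ne' (by positivity),
      Real.log_mul hl.ne' (by positivity), Real.log_mul hx hy, Real.log_pow, Real.log_pow,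
      Real.log_pow]
    push_cast
    ring
  have e6 : ∑ i, (∑ j, α i j * Real.log (l * x i ^ 2 / Z) + ∑ j, α i j * Real.log (l * y j ^ 2 / Z)
      - 2 * ∑ j, α i j * Real.log (α i j)) = Real.log (l ^ 2) := by
    calc _ = ∑ i, ∑ j, α i j * Real.log (l ^ 2) := by
          refine Finset.sum_congr rfl fun i _ => ?_
          rw [Finset.mul_sum, ← Finset.sum_add_distrib, ← Finset.sum_sub_distrib]
          exact Finset.sum_congr rfl fun j _ => e5 i j
      _ = Real.log (l ^ 2) := by
          simp only [← Finset.sum_mul]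
          rw [hone, one_mul]
  simp only [← Finset.sum_add_distrib] at e6 ⊢
  rw [e6, Real.exp_log (by positivity)]

theorem tendsto_poly_root (K : ℕ) :
    Tendsto (fun n : ℕ => (((n : ℝ) + 1) ^ K) ^ (1 / (n : ℝ))) atTop (nhds 1) := by
  have h : Tendsto (fun n : ℕ => Real.log ((n : ℝ) + 1) / n) atTop (nhds 0) := by
    refine squeeze_zero (fun n => ?_) (fun n => ?_) tendsto_log_add_one_div
    · exact div_nonneg (Real.log_nonneg (by linarith [Nat.cast_nonneg (α := ℝ) n]))
        (Nat.cast_nonneg _)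
    · refine div_le_div_of_nonneg_right ?_ (Nat.cast_nonneg _)
      linarith
  have h2 := (Real.continuous_exp.tendsto _).comp (h.const_mul (K : ℝ))
  rw [mul_zero, Real.exp_zero] at h2
  refine h2.congr fun n => ?_
  rw [Real.rpow_def_of_pos (by positivity), Real.log_pow]
  simp only [Function.comp_apply]
  congr 1
  ring

/-- The growth rate of a monotone grid class (which exists) is an algebraic integer. -/
theorem grid_growth_rate_algebraic_integer {t u : ℕ} (ht : 1 ≤ t) (hu : 1 ≤ u)
    (M : Fin t → Fin u → ℤ) (hM : ∀ i j, M i j = 0 ∨ M i j = 1 ∨ M i j = -1) :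
    ∃ γ : ℝ,
      Tendsto (fun n : ℕ => (gridCount M n : ℝ) ^ (1 / (n : ℝ))) atTop (nhds γ) ∧
      IsIntegral ℤ γ := by
  let Bz : Fin t → Fin u → ℤ := fun i j => if M i j = 0 then 0 else 1
  let B : Fin t → Fin u → ℝ := fun i j => (Bz i j : ℝ)
  let N : Matrix (Fin t ⊕ Fin u) (Fin t ⊕ Fin u) ℤ := Matrix.fromBlocks 0 (Matrix.of Bz)
    (Matrix.of Bz).transpose 0
  have : Nonempty (Fin t ⊕ Fin u) := ⟨Sum.inl ⟨0, ht⟩⟩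
  have hBz : ∀ i j, 0 ≤ Bz i j := fun i j => by
    simp only [Bz]; split_ifs <;> norm_num
  have hB01 : ∀ i j, B i j = 0 ∨ B i j = 1 := fun i j => by
    simp only [B, Bz]; split_ifs <;> norm_num
  have hBv : ∀ i j (z : ℝ), B i j * z = if M i j = 0 then 0 else z := fun i j z => by
    simp only [B, Bz]; split_ifs <;> norm_num
  obtain ⟨l, hl0, hlint, ⟨v, hv0, hvne, hv⟩, hup⟩ := spectral_aux N
    (by rintro (i | i) (j | j) <;> simp [N])
    (by rintro (i | i) (j | j) <;> simp [N, hBz])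
  have hrow1 : ∀ (z : Fin t ⊕ Fin u → ℝ) i, ∑ j, (N (Sum.inl i) j : ℝ) * z j =
      ∑ j, B i j * z (Sum.inr j) := fun z i => by
    simp [Fintype.sum_sum_type, N, B]
  have hrow2 : ∀ (z : Fin t ⊕ Fin u → ℝ) j, ∑ i, (N (Sum.inr j) i : ℝ) * z i =
      ∑ i, B i j * z (Sum.inl i) := fun z i => by
    simp [Fintype.sum_sum_type, N, B]
  refine ⟨l ^ 2, ?_, hlint.pow 2⟩
  rw [tendsto_order]
  constructor
  · -- lower bound
    intro b hb
    rcases hl0.eq_or_lt with h | hl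
    · rw [← h] at hb
      refine Eventually.of_forall fun n => lt_of_lt_of_le hb ?_
      rw [zero_pow two_ne_zero]
      positivity
    let x : Fin t → ℝ := fun i => v (Sum.inl i)
    let y : Fin u → ℝ := fun j => v (Sum.inr j)
    have hx0 : ∀ i, 0 ≤ x i := fun i => hv0 _
    have hy0 : ∀ i, 0 ≤ y i := fun i => hv0 _
    have h1 : ∀ i, ∑ j, B i j * y j = l * x i := fun i => by rw [← hv (Sum.inl i), hrow1]
    have h2 : ∀ j, ∑ i, B i j * x i = l * y j := fun j => by rw [← hv (Sum.inr j), hrow2]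
    let Z : ℝ := ∑ i, ∑ j, B i j * x i * y j
    have hZeq : Z = l * ∑ i, x i ^ 2 := by
      simp only [Z]
      rw [Finset.mul_sum]
      refine Finset.sum_congr rfl fun i _ => ?_
      rw [Finset.sum_congr rfl fun j _ =>
        (show B i j * x i * y j = x i * (B i j * y j) by ring), ← Finset.mul_sum, h1]
      ring
    have hZ : 0 < Z := by
      rw [hZeq]
      refine mul_pos hl ?_
      have hnn : 0 ≤ ∑ i, x i ^ 2 := Finset.sum_nonneg fun i _ => sq_nonneg _
      rcases hnn.lt_or_eq with h | h
      · exact h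
      exfalso
      have hx : ∀ i, x i = 0 := fun i => by
        have := (Finset.sum_eq_zero_iff_of_nonneg (fun i _ => sq_nonneg (x i))).1 h.symm i
          (Finset.mem_univ i)
        exact pow_eq_zero_iff two_ne_zero |>.1 this
      have hy : ∀ j, y j = 0 := fun j => by
        have := h2 j
        simp only [hx, mul_zero, Finset.sum_const_zero] at this
        rcases mul_eq_zero.1 this.symm with h | h
        · exact absurd h hl.ne'
        · exact h
      apply hvne
      funext k
      rcases k with i | j
      · exact hx i
      · exact hy j
    let α : Fin t → Fin u → ℝ := fun i j => B i j * x i * y j / Z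
    have hone : ∑ i, ∑ j, α i j = 1 := by
      simp only [α, ← Finset.sum_div]
      exact div_self hZ.ne'
    have hBnn : ∀ i j, 0 ≤ B i j := fun i j => by
      simp only [B]
      exact_mod_cast hBz i j
    obtain ⟨s, hs, hsle⟩ := lower_bound M α
      (fun i j => div_nonneg (mul_nonneg (mul_nonneg (hBnn i j) (hx0 i)) (hy0 j)) hZ.le) hone
      (fun i j h => by simp [α, B, Bz, h])
    rw [entropy_value B hB01 l hl x y h1 h2 Z hZ α (fun i j => rfl) hone] at hs
    filter_upwards [(tendsto_order.1 hs).1 b hb, eventually_gt_atTop 0] with n hn1 hn2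
    exact lt_of_lt_of_le hn1 (hsle n hn2)
  · intro b hb
    have hb0 : 0 ≤ b := le_trans (sq_nonneg l) hb.le
    have hlb : l < Real.sqrt b := Real.lt_sqrt_of_sq_lt hb
    obtain ⟨m, hm1, hm2⟩ := exists_between hlb
    have hm0 : 0 ≤ m := hl0.trans hm1.le
    have hmb : m ^ 2 < b := (Real.lt_sqrt hm0).1 hm2
    obtain ⟨z, hz0, hz⟩ := hup m hm1
    have hle : ∀ n, (gridCount M n : ℝ) ≤ ((n : ℝ) + 1) ^ (t + u + 2) * (m ^ 2) ^ n := fun n => by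
      refine gridCount_le M hM m (fun i => z (Sum.inl i)) (fun j => z (Sum.inr j))
        (fun i => hz0 _) (fun j => hz0 _) (fun i => ?_) (fun j => ?_)
      · have := hz (Sum.inl i)
        rw [hrow1] at this
        simpa only [hBv] using this
      · have := hz (Sum.inr j)
        rw [hrow2] at this
        simpa only [hBv] using this
    have hT := (tendsto_poly_root (t + u + 2)).mul_const (m ^ 2)
    rw [one_mul] at hT
    filter_upwards [(tendsto_order.1 hT).2 b hmb, eventually_gt_atTop 0] with n hn1 hn2
    refine lt_of_le_of_lt ?_ hn1
    have hn' : (n : ℝ) ≠ 0 := by exact_mod_cast hn2.ne'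
    calc (gridCount M n : ℝ) ^ (1 / (n : ℝ))
        ≤ (((n : ℝ) + 1) ^ (t + u + 2) * (m ^ 2) ^ n) ^ (1 / (n : ℝ)) :=
          Real.rpow_le_rpow (Nat.cast_nonneg _) (hle n) (by positivity)
      _ = (((n : ℝ) + 1) ^ (t + u + 2)) ^ (1 / (n : ℝ)) * m ^ 2 := by
          rw [Real.mul_rpow (by positivity) (by positivity), ← Real.rpow_natCast (m ^ 2) n,
            ← Real.rpow_mul (by positivity), mul_one_div_cancel hn', Real.rpow_one]
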